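/- arXiv:2009.10399 — 2 statements merged into one kernel-verified Lean document; each statement's English description precedes it below -/
import Mathlib

section
/- Let L, N be a lightlike frame along the unit-speed spacelike curve γ̂, with first component L₀(0) of L(0) nonzero, and set h̃(u) = ⟨γ̂(u), L(0)/L₀(0)⟩ − ⟨γ̂(0), L(0)/L₀(0)⟩. Then h̃(0) = 0, h̃′(0) = 0, h̃″(0) = α_L(0)/L₀(0), and h̃‴(0) = σ_L(0)/L₀(0). In particular h̃″(0) = 0 if and only if α_L(0) = 0. -/
/-!
Differentiating the height function only differentiates `γ`, so its derivatives are the pairings of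
`γ'`, `γ''`, `γ'''` with a fixed multiple of `L(u₀)`. The first is `⟨γ', L⟩ = 0` and the second is
`α_L`, up to scale. For the third, `⟨γ''', L⟩ = α_L' - ⟨γ'', L'⟩`, and it remains to see that
`⟨γ'', L'⟩ = -α_L α_G`. Since `⟨L', L⟩ = 0`, the vector `L'` lies in `L^⊥ = span {γ', L}`; as
`⟨γ'', γ'⟩ = 0`, only its `L`-component `⟨N, L'⟩ = -α_G` contributes.
-/

open scoped Topology

noncomputable section

/-- Points/vectors of Lorentz–Minkowski 3-space `ℝ³₁`. -/
abbrev R3 : Type := Fin 3 → ℝ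

/-- The Lorentz–Minkowski scalar product `⟨x,y⟩ = -x₀y₀ + x₁y₁ + x₂y₂`. -/
def mink (x y : R3) : ℝ := -(x 0 * y 0) + x 1 * y 1 + x 2 * y 2

/-- `(L, N)` is a lightlike frame along the unit-speed spacelike curve `γ` on `I`:
`γ, L, N` are smooth on `I`, `⟨e,e⟩ = 1` (with `e = γ'`), `⟨e,L⟩ = ⟨e,N⟩ = 0`,
`⟨L,L⟩ = ⟨N,N⟩ = 0` and `⟨L,N⟩ = 1` on `I`. -/
structure LightlikeFrame (I : Set ℝ) (γ L N : ℝ → R3) : Prop where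
  smooth_gamma : ContDiffOn ℝ (⊤ : ℕ∞) γ I
  smooth_L : ContDiffOn ℝ (⊤ : ℕ∞) L I
  smooth_N : ContDiffOn ℝ (⊤ : ℕ∞) N I
  unit_speed : ∀ u ∈ I, mink (deriv γ u) (deriv γ u) = 1
  eL : ∀ u ∈ I, mink (deriv γ u) (L u) = 0
  eN : ∀ u ∈ I, mink (deriv γ u) (N u) = 0
  LL : ∀ u ∈ I, mink (L u) (L u) = 0
  NN : ∀ u ∈ I, mink (N u) (N u) = 0
  LN : ∀ u ∈ I, mink (L u) (N u) = 1

/-- `α_L = ⟨γ'', L⟩`. -/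
def alphaL (γ L : ℝ → R3) (u : ℝ) : ℝ := mink (deriv (deriv γ) u) (L u)

/-- `α_N = ⟨γ'', N⟩`. -/
def alphaN (γ N : ℝ → R3) (u : ℝ) : ℝ := mink (deriv (deriv γ) u) (N u)

/-- `α_G = ⟨L, N'⟩`. -/
def alphaG (L N : ℝ → R3) (u : ℝ) : ℝ := mink (L u) (deriv N u)

/-- `σ_L = α_L' + α_L α_G`. -/
def sigmaL (γ L N : ℝ → R3) (u : ℝ) : ℝ :=
  deriv (alphaL γ L) u + alphaL γ L u * alphaG L N u

/-- `σ_N = α_N' - α_N α_G`. -/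
def sigmaN (γ L N : ℝ → R3) (u : ℝ) : ℝ :=
  deriv (alphaN γ N) u - alphaN γ N u * alphaG L N u

section LinearAlgebra

variable {K V : Type*} [Field K] [AddCommGroup V] [Module K V] {B : LinearMap.BilinForm K V}
  {e l n v w : V}

theorem linearIndependent_of_isotropic (hee : B e e ≠ 0) (hel : B e l = 0) (hll : B l l = 0)
    (hnl : B n l ≠ 0) : LinearIndependent K ![e, l, n] := by
  rw [Fintype.linearIndependent_iff]
  intro g hg
  simp only [Fin.sum_univ_three, Matrix.cons_val] at hg
  have hn : g 2 = 0 := by simpa [hel, hll, hnl] using congrArg (B · l) hg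
  have he : g 0 = 0 := by simpa [hn, hel, hee] using congrArg (B e) hg
  have hl : g 1 = 0 := by simpa [hn, he, hnl] using congrArg (B n) hg
  simp [Fin.forall_fin_succ, he, hl, hn]

theorem mem_span_pair_of_isotropic (hV : Module.finrank K V = 3) (hee : B e e ≠ 0)
    (hel : B e l = 0) (hll : B l l = 0) (hnl : B n l ≠ 0) (hvl : B v l = 0) :
    v ∈ Submodule.span K {e, l} := by
  have hspan : Submodule.span K {e, l, n} = ⊤ := by
    simpa only [Matrix.range_cons, Matrix.range_empty, Set.union_empty, Set.singleton_union] using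
      (linearIndependent_of_isotropic hee hel hll hnl).span_eq_top_of_card_eq_finrank (by simp [hV])
  obtain ⟨a, b, c, rfl⟩ :=
    Submodule.mem_span_triple.mp (hspan ▸ Submodule.mem_top : v ∈ Submodule.span K {e, l, n})
  have hc : c = 0 := by simpa [hel, hll, hnl] using hvl
  exact Submodule.mem_span_pair.mpr ⟨a, b, by simp [hc]⟩

theorem bilinForm_apply_eq_mul_of_isotropic (hV : Module.finrank K V = 3) (hee : B e e ≠ 0)
    (hel : B e l = 0) (hll : B l l = 0) (hne : B n e = 0) (hnl : B n l = 1)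
    (hvl : B v l = 0) (hwe : B w e = 0) : B w v = B n v * B w l := by
  obtain ⟨a, b, rfl⟩ := Submodule.mem_span_pair.mp
    (mem_span_pair_of_isotropic hV hee hel hll (hnl ▸ one_ne_zero) hvl)
  simp [hne, hnl, hwe]

end LinearAlgebra

theorem iterate_deriv_continuousLinearMap_comp {𝕜 E F : Type*} [NontriviallyNormedField 𝕜]
    [NormedAddCommGroup E] [NormedSpace 𝕜 E] [NormedAddCommGroup F] [NormedSpace 𝕜 F]
    (φ : E →L[𝕜] F) {f : 𝕜 → E} {x : 𝕜} {n : ℕ} (hf : ContDiffAt 𝕜 n f x) :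
    deriv^[n] (fun t ↦ φ (f t)) x = φ (deriv^[n] f x) := by
  simp only [← iteratedDeriv_eq_iterate, iteratedDeriv]
  exact congrArg (· fun _ ↦ 1) (φ.iteratedFDeriv_comp_left hf le_rfl)

section Calculus

variable {E : Type*} [NormedAddCommGroup E] [NormedSpace ℝ E] [FiniteDimensional ℝ E]
  {B : LinearMap.BilinForm ℝ E} {x y : ℝ → E} {x' y' : E} {t : ℝ}

theorem iterate_deriv_succ_bilinForm_sub_const (v : E) (c : ℝ) {n : ℕ}
    (hx : ContDiffAt ℝ (n + 1 : ℕ) x t) :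
    deriv^[n + 1] (fun s ↦ B (x s) v - c) t = B (deriv^[n + 1] x t) v := by
  rw [Function.iterate_succ_apply, deriv_sub_const_fun, ← Function.iterate_succ_apply]
  exact iterate_deriv_continuousLinearMap_comp (B.flip v).toContinuousLinearMap hx

theorem hasDerivAt_bilinForm (hx : HasDerivAt x x' t) (hy : HasDerivAt y y' t) :
    HasDerivAt (fun s ↦ B (x s) (y s)) (B (x t) y' + B x' (y t)) t :=
  B.toContinuousBilinearMap.hasDerivAt_of_bilinear (fun _ ↦ hx) fun _ ↦ hy

theorem bilinForm_deriv_add_eq_zero (hx : HasDerivAt x x' t) (hy : HasDerivAt y y' t) {c : ℝ}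
    (hc : ∀ᶠ s in 𝓝 t, B (x s) (y s) = c) : B (x t) y' + B x' (y t) = 0 :=
  (hasDerivAt_bilinForm hx hy).unique ((hasDerivAt_const t c).congr_of_eventuallyEq hc)

theorem bilinForm_deriv_self_eq_zero (hB : B.IsSymm) (hx : HasDerivAt x x' t) {c : ℝ}
    (hc : ∀ᶠ s in 𝓝 t, B (x s) (x s) = c) : B x' (x t) = 0 := by
  have hsum := bilinForm_deriv_add_eq_zero hx hx hc
  rw [hB.eq (x t)] at hsum
  exact add_self_eq_zero.mp hsum

end Calculus

/-- The infinitesimal version of a lightlike frame at the parameter `u₀`, for an arbitrary bilinear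
form `B`: the constraints that get differentiated are imposed near `u₀`, the others only at `u₀`.
The velocity may have any nonzero constant square, and `N` need not be lightlike. -/
structure AdaptedFrameAt {E : Type*} [NormedAddCommGroup E] [NormedSpace ℝ E]
    (B : LinearMap.BilinForm ℝ E) (γ L N : ℝ → E) (u₀ : ℝ) : Prop where
  contDiffAt : ContDiffAt ℝ 3 γ u₀
  differentiableAt_L : DifferentiableAt ℝ L u₀
  differentiableAt_N : DifferentiableAt ℝ N u₀
  speed_ne_zero : B (deriv γ u₀) (deriv γ u₀) ≠ 0
  speed_const : ∀ᶠ u in 𝓝 u₀, B (deriv γ u) (deriv γ u) = B (deriv γ u₀) (deriv γ u₀)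
  eL : B (deriv γ u₀) (L u₀) = 0
  eN : B (deriv γ u₀) (N u₀) = 0
  LL : ∀ᶠ u in 𝓝 u₀, B (L u) (L u) = 0
  LN : ∀ᶠ u in 𝓝 u₀, B (L u) (N u) = 1

namespace AdaptedFrameAt

variable {E : Type*} [NormedAddCommGroup E] [NormedSpace ℝ E] {B : LinearMap.BilinForm ℝ E}
  {γ L N : ℝ → E} {u₀ : ℝ}

theorem hasDerivAt_deriv (hframe : AdaptedFrameAt B γ L N u₀) :
    HasDerivAt (deriv γ) (deriv (deriv γ) u₀) u₀ :=
  ((hframe.contDiffAt.derivWithin (m := 2) (by norm_num)).differentiableAt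
    two_ne_zero).hasDerivAt

theorem hasDerivAt_deriv_deriv (hframe : AdaptedFrameAt B γ L N u₀) :
    HasDerivAt (deriv (deriv γ)) (deriv^[3] γ u₀) u₀ :=
  (((hframe.contDiffAt.derivWithin (m := 2) (by norm_num)).derivWithin (m := 1)
    (by norm_num)).differentiableAt one_ne_zero).hasDerivAt

theorem bilinForm_deriv_deriv_deriv (hE : Module.finrank ℝ E = 3) (hB : B.IsSymm)
    (hframe : AdaptedFrameAt B γ L N u₀) :
    B (deriv (deriv γ) u₀) (deriv L u₀) =
      -(B (deriv (deriv γ) u₀) (L u₀) * B (L u₀) (deriv N u₀)) := by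
  have := FiniteDimensional.of_finrank_pos (hE ▸ three_pos)
  have hL := hframe.differentiableAt_L.hasDerivAt
  have deriv_deriv_orthogonal_e : B (deriv (deriv γ) u₀) (deriv γ u₀) = 0 :=
    bilinForm_deriv_self_eq_zero hB hframe.hasDerivAt_deriv hframe.speed_const
  have deriv_L_orthogonal_L : B (deriv L u₀) (L u₀) = 0 :=
    bilinForm_deriv_self_eq_zero hB hL hframe.LL
  have deriv_LN : B (L u₀) (deriv N u₀) + B (deriv L u₀) (N u₀) = 0 :=
    bilinForm_deriv_add_eq_zero hL hframe.differentiableAt_N.hasDerivAt hframe.LN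
  calc
    B (deriv (deriv γ) u₀) (deriv L u₀)
      = B (N u₀) (deriv L u₀) * B (deriv (deriv γ) u₀) (L u₀) :=
        bilinForm_apply_eq_mul_of_isotropic hE hframe.speed_ne_zero hframe.eL
          hframe.LL.self_of_nhds ((hB.eq _ _).trans hframe.eN)
          ((hB.eq _ _).trans hframe.LN.self_of_nhds) deriv_L_orthogonal_L deriv_deriv_orthogonal_e
    _ = -(B (deriv (deriv γ) u₀) (L u₀) * B (L u₀) (deriv N u₀)) := by
        rw [hB.eq (N u₀), eq_neg_of_add_eq_zero_right deriv_LN, neg_mul, mul_comm]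

theorem bilinForm_iterate_deriv_three (hE : Module.finrank ℝ E = 3) (hB : B.IsSymm)
    (hframe : AdaptedFrameAt B γ L N u₀) :
    B (deriv^[3] γ u₀) (L u₀) =
      deriv (fun u ↦ B (deriv (deriv γ) u) (L u)) u₀ +
        B (deriv (deriv γ) u₀) (L u₀) * B (L u₀) (deriv N u₀) := by
  have := FiniteDimensional.of_finrank_pos (hE ▸ three_pos)
  rw [(hasDerivAt_bilinForm hframe.hasDerivAt_deriv_deriv
    hframe.differentiableAt_L.hasDerivAt).deriv, hframe.bilinForm_deriv_deriv_deriv hE hB]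
  ring

end AdaptedFrameAt

theorem height_function_derivatives_general {E : Type*} [NormedAddCommGroup E] [NormedSpace ℝ E]
    (hE : Module.finrank ℝ E = 3) {B : LinearMap.BilinForm ℝ E} (hB : B.IsSymm)
    {γ L N : ℝ → E} {u₀ : ℝ} (hframe : AdaptedFrameAt B γ L N u₀) {c : ℝ} (hc : c ≠ 0)
    {h : ℝ → ℝ} (hh : ∀ u, h u = B (γ u) (c⁻¹ • L u₀) - B (γ u₀) (c⁻¹ • L u₀)) :
    h u₀ = 0 ∧ deriv h u₀ = 0 ∧
    deriv (deriv h) u₀ = B (deriv (deriv γ) u₀) (L u₀) / c ∧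
    deriv^[3] h u₀ = (deriv (fun u ↦ B (deriv (deriv γ) u) (L u)) u₀ +
      B (deriv (deriv γ) u₀) (L u₀) * B (L u₀) (deriv N u₀)) / c ∧
    (deriv (deriv h) u₀ = 0 ↔ B (deriv (deriv γ) u₀) (L u₀) = 0) := by
  have := FiniteDimensional.of_finrank_pos (hE ▸ three_pos)
  have iterate_deriv_h {n : ℕ} (hn : n + 1 ≤ 3) :
      deriv^[n + 1] h u₀ = B (deriv^[n + 1] γ u₀) (L u₀) / c := by
    rw [funext hh, iterate_deriv_succ_bilinForm_sub_const _ _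
      (hframe.contDiffAt.of_le (by exact_mod_cast hn)), map_smul, smul_eq_mul, div_eq_inv_mul]
  have deriv_h : deriv h u₀ = B (deriv γ u₀) (L u₀) / c := iterate_deriv_h (n := 0) (by simp)
  have deriv_deriv_h : deriv (deriv h) u₀ = B (deriv (deriv γ) u₀) (L u₀) / c :=
    iterate_deriv_h (n := 1) (by simp)
  refine ⟨?_, ?_, deriv_deriv_h, ?_, ?_⟩
  · rw [hh, sub_self]
  · rw [deriv_h, hframe.eL, zero_div]
  · rw [iterate_deriv_h le_rfl, hframe.bilinForm_iterate_deriv_three hE hB]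
  · rw [deriv_deriv_h, div_eq_zero_iff, or_iff_left hc]

/-- The Lorentz–Minkowski scalar product `mink` as a bilinear form. -/
def minkForm : LinearMap.BilinForm ℝ R3 :=
  LinearMap.mk₂ ℝ mink (fun x y z ↦ by simp only [mink, Pi.add_apply]; ring)
    (fun c x y ↦ by simp only [mink, Pi.smul_apply, smul_eq_mul]; ring)
    (fun x y z ↦ by simp only [mink, Pi.add_apply]; ring)
    (fun c x y ↦ by simp only [mink, Pi.smul_apply, smul_eq_mul]; ring)

theorem minkForm_isSymm : minkForm.IsSymm where
  eq x y := by simp only [minkForm, LinearMap.mk₂_apply, mink, mul_comm]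

theorem LightlikeFrame.adaptedFrameAt {I : Set ℝ} {γ L N : ℝ → R3} (hframe : LightlikeFrame I γ L N)
    {u : ℝ} (hI : I ∈ 𝓝 u) : AdaptedFrameAt minkForm γ L N u :=
  have hu := mem_of_mem_nhds hI
  { contDiffAt := contDiffAt_infty.mp (hframe.smooth_gamma.contDiffAt hI) 3
    differentiableAt_L := (hframe.smooth_L.contDiffAt hI).differentiableAt (by simp)
    differentiableAt_N := (hframe.smooth_N.contDiffAt hI).differentiableAt (by simp)
    speed_ne_zero := (hframe.unit_speed u hu).trans_ne one_ne_zero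
    speed_const := Filter.eventually_of_mem hI fun v hv ↦
      (hframe.unit_speed v hv).trans (hframe.unit_speed u hu).symm
    eL := hframe.eL u hu
    eN := hframe.eN u hu
    LL := Filter.eventually_of_mem hI hframe.LL
    LN := Filter.eventually_of_mem hI hframe.LN }

/-- With `h̃(u) = ⟨γ̂(u), L(0)/L₀(0)⟩ - ⟨γ̂(0), L(0)/L₀(0)⟩` one has
`h̃(0) = 0`, `h̃'(0) = 0`, `h̃''(0) = α_L(0)/L₀(0)` and `h̃'''(0) = σ_L(0)/L₀(0)`;
in particular `h̃''(0) = 0` iff `α_L(0) = 0`. -/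
theorem height_function_derivatives (a b : ℝ) (γ L N : ℝ → R3)
    (hframe : LightlikeFrame (Set.Ioo a b) γ L N)
    (h0 : (0 : ℝ) ∈ Set.Ioo a b) (hL0 : L 0 0 ≠ 0)
    (h : ℝ → ℝ)
    (hh : ∀ u, h u = mink (γ u) ((L 0 0)⁻¹ • L 0) - mink (γ 0) ((L 0 0)⁻¹ • L 0)) :
    h 0 = 0 ∧ deriv h 0 = 0 ∧
    deriv (deriv h) 0 = alphaL γ L 0 / L 0 0 ∧
    deriv^[3] h 0 = sigmaL γ L N 0 / L 0 0 ∧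
    (deriv (deriv h) 0 = 0 ↔ alphaL γ L 0 = 0) :=
  height_function_derivatives_general (by simp) minkForm_isSymm
    (hframe.adaptedFrameAt (isOpen_Ioo.mem_nhds h0)) hL0 hh
end
end

section
/- Let L, N be a lightlike frame along the unit-speed spacelike curve γ̂ with α_L(0) ≠ 0, set x_L = γ̂(0) + L(0)/α_L(0) and g_L(u) = ⟨γ̂(u) − x_L, γ̂(u) − x_L⟩. Then for every integer k ≥ 3: g_L(0) = g_L′(0) = ⋯ = g_L^{(k)}(0) = 0 if and only if σ_L(0) = σ_L′(0) = ⋯ = σ_L^{(k−3)}(0) = 0. Similarly, if α_N(0) ≠ 0, x_N = γ̂(0) + N(0)/α_N(0) and g_N(u) = ⟨γ̂(u) − x_N, γ̂(u) − x_N⟩, then for every k ≥ 3: g_N(0) = ⋯ = g_N^{(k)}(0) = 0 if and only if σ_N(0) = ⋯ = σ_N^{(k−3)}(0) = 0. -/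
open scoped Topology

noncomputable section

/-!
Let `c u = γ u + L u / α_L u` be the moving vertex, so that `c t` is the vertex `x_L` attached to
the parameter `t`. The frame equations give `c' = -(σ_L / α_L²) L`, hence `σ_L` vanishes to order
`m` at `t` exactly when `c - c t` vanishes to order `m + 1`. Since `γ - c` and `c'` are multiples
of `L`, hence orthogonal to `e` and `L`, the function `g u = ⟨γ u - c t, γ u - c t⟩` satisfies
`g' = 2 ⟨c - c t, e⟩`, and in the derivatives of `⟨c - c t, e⟩` and `⟨c - c t, L⟩` only `e` and `L`
need to be differentiated. Thus `⟨c - c t, e⟩` vanishes to one order more than `c - c t`, and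
conversely its vanishing forces, through the frame equations, that of all three frame coordinates
of `c - c t`. The claim for `N` follows because interchanging `L` and `N` turns `σ_L` into `σ_N`.
-/

open scoped ContDiff

section VanishesToOrder

variable {𝕜 E F G : Type*} [NontriviallyNormedField 𝕜] [NormedAddCommGroup E] [NormedSpace 𝕜 E]
  [NormedAddCommGroup F] [NormedSpace 𝕜 F] [NormedAddCommGroup G] [NormedSpace 𝕜 G]
  {m n : ℕ} {x : 𝕜}

/-- `f` vanishes to order `m` at `x`: its derivatives of order strictly less than `m` are zero
at `x`, so that `m` counts the vanishing Taylor coefficients. -/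
def VanishesToOrder (m : ℕ) (f : 𝕜 → F) (x : 𝕜) : Prop :=
  ∀ l < m, iteratedDeriv l f x = 0

namespace VanishesToOrder

variable {f g : 𝕜 → F} {c r : 𝕜 → 𝕜}

theorem zero : VanishesToOrder 0 f x :=
  fun _ hl => absurd hl (Nat.not_lt_zero _)

theorem mono (h : VanishesToOrder n f x) (hmn : m ≤ n) : VanishesToOrder m f x :=
  fun l hl => h l (hl.trans_le hmn)

theorem succ_iff : VanishesToOrder (m + 1) f x ↔ f x = 0 ∧ VanishesToOrder m (deriv f) x := by
  simp only [VanishesToOrder, Nat.forall_lt_succ_left, iteratedDeriv_zero, iteratedDeriv_succ']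

theorem succ_iff_forall_le : VanishesToOrder (m + 1) f x ↔ ∀ l ≤ m, deriv^[l] f x = 0 := by
  simp only [VanishesToOrder, Nat.lt_succ_iff, iteratedDeriv_eq_iterate]

theorem congr_iff (hfg : f =ᶠ[𝓝 x] g) : VanishesToOrder m f x ↔ VanishesToOrder m g x :=
  forall₂_congr fun l _ => by rw [(hfg.iteratedDeriv l).eq_of_nhds]

theorem add (hf : ContDiffAt 𝕜 m f x) (hg : ContDiffAt 𝕜 m g x) (hfv : VanishesToOrder m f x)
    (hgv : VanishesToOrder m g x) : VanishesToOrder m (fun u => f u + g u) x := fun l hl => by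
  have hlm : (l : ℕ∞ω) ≤ m := mod_cast hl.le
  rw [iteratedDeriv_fun_add (hf.of_le hlm) (hg.of_le hlm), hfv l hl, hgv l hl, add_zero]

theorem bilinear_left (B : E →L[𝕜] F →L[𝕜] G) {f : 𝕜 → E} {g : 𝕜 → F} (hf : ContDiffAt 𝕜 m f x)
    (hg : ContDiffAt 𝕜 m g x) (hfv : VanishesToOrder m f x) :
    VanishesToOrder m (fun u => B (f u) (g u)) x := by
  induction m generalizing f g with
  | zero => exact zero
  | succ m ih =>
    have hf_deriv : ContDiffAt 𝕜 m (deriv f) x := hf.derivWithin le_rfl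
    have hg_deriv : ContDiffAt 𝕜 m (deriv g) x := hg.derivWithin le_rfl
    have hmm : (m : ℕ∞ω) ≤ (m + 1 : ℕ) := mod_cast m.le_succ
    have leibniz : deriv (fun u => B (f u) (g u)) =ᶠ[𝓝 x]
        fun u => B (f u) (deriv g u) + B (deriv f u) (g u) := by
      filter_upwards [hf.eventually (by simp), hg.eventually (by simp)] with u hfu hgu
      exact B.deriv_of_bilinear (fun _ => hfu.differentiableAt (by simp))
        fun _ => hgu.differentiableAt (by simp)
    have hf_of_le := hf.of_le hmm
    have hg_of_le := hg.of_le hmm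
    obtain ⟨hfx, hfv_deriv⟩ := succ_iff.1 hfv
    refine succ_iff.2 ⟨by simp [hfx], (congr_iff leibniz).2 (add ?_ ?_ ?_ ?_)⟩
    · exact (contDiffAt_const.clm_apply hf_of_le).clm_apply hg_deriv
    · exact (contDiffAt_const.clm_apply hf_deriv).clm_apply hg_of_le
    · exact ih hf_of_le hg_deriv (hfv.mono m.le_succ)
    · exact ih hf_deriv hg_of_le hfv_deriv

theorem smul_left (hc : ContDiffAt 𝕜 m c x) (hf : ContDiffAt 𝕜 m f x)
    (hcv : VanishesToOrder m c x) : VanishesToOrder m (fun u => c u • f u) x :=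
  bilinear_left (.lsmul 𝕜 𝕜) hc hf hcv

theorem smul_right (hc : ContDiffAt 𝕜 m c x) (hf : ContDiffAt 𝕜 m f x)
    (hfv : VanishesToOrder m f x) : VanishesToOrder m (fun u => c u • f u) x :=
  bilinear_left (ContinuousLinearMap.lsmul 𝕜 𝕜).flip hf hc hfv

theorem smul_iff (hc : ContDiffAt 𝕜 m c x) (hf : ContDiffAt 𝕜 m f x) (hcx : c x ≠ 0) :
    VanishesToOrder m (fun u => c u • f u) x ↔ VanishesToOrder m f x := by
  refine ⟨fun h => ?_, smul_right hc hf⟩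
  have cancel : (fun u => (c u)⁻¹ • c u • f u) =ᶠ[𝓝 x] f := by
    filter_upwards [hc.continuousAt.eventually_ne hcx] with u hu
    exact inv_smul_smul₀ hu (f u)
  exact (congr_iff cancel).1 (smul_right (hc.inv hcx) (hc.smul hf) h)

theorem of_deriv_eq_smul_add {y : 𝕜 → F} (hr : ContDiffAt 𝕜 m r x) (hy : ContDiffAt 𝕜 m y x)
    (hf : ContDiffAt 𝕜 m f x) (hyx : y x = 0) (hy_deriv : deriv y =ᶠ[𝓝 x] fun u => r u • y u + f u)
    (hfv : VanishesToOrder m f x) : VanishesToOrder (m + 1) y x := by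
  refine succ_iff.2 ⟨hyx, (congr_iff hy_deriv).2 ?_⟩
  induction m with
  | zero => exact zero
  | succ m ih =>
    have hmm : (m : ℕ∞ω) ≤ (m + 1 : ℕ) := mod_cast m.le_succ
    have hyv : VanishesToOrder m (deriv y) x := (congr_iff hy_deriv).2 <|
      ih (hr.of_le hmm) (hy.of_le hmm) (hf.of_le hmm) (hfv.mono m.le_succ)
    exact add (hr.smul hy) hf (smul_right hr hy (succ_iff.2 ⟨hyx, hyv⟩)) hfv

end VanishesToOrder

end VanishesToOrder

section Mink

variable {v w : ℝ → R3} {v' w' : R3} {u : ℝ}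

theorem mink_comm (x y : R3) : mink x y = mink y x := by
  simp only [mink]; ring

theorem mink_add_left (x y z : R3) : mink (x + y) z = mink x z + mink y z := by
  simp only [mink, Pi.add_apply]; ring

theorem mink_smul_left (c : ℝ) (x y : R3) : mink (c • x) y = c * mink x y := by
  simp only [mink, Pi.smul_apply, smul_eq_mul]; ring

theorem mink_add_right (x y z : R3) : mink x (y + z) = mink x y + mink x z := by
  rw [mink_comm, mink_add_left, mink_comm y, mink_comm z]

theorem mink_smul_right (c : ℝ) (x y : R3) : mink x (c • y) = c * mink x y := by
  rw [mink_comm, mink_smul_left, mink_comm]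

theorem mink_zero_left (x : R3) : mink 0 x = 0 := by
  simp [mink]

/-- The Lorentz–Minkowski scalar product as a bounded bilinear map, which gives access to the
calculus of bilinear maps. -/
def minkCLM : R3 →L[ℝ] R3 →L[ℝ] ℝ :=
  (LinearMap.mk₂ ℝ mink mink_add_left mink_smul_left mink_add_right
    mink_smul_right).toContinuousBilinearMap

theorem hasDerivAt_mink (hv : HasDerivAt v v' u) (hw : HasDerivAt w w' u) :
    HasDerivAt (fun u => mink (v u) (w u)) (mink (v u) w' + mink v' (w u)) u :=
  minkCLM.hasDerivAt_of_bilinear (fun _ => hv) fun _ => hw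

theorem contDiffAt_mink {n : ℕ∞ω} (hv : ContDiffAt ℝ n v u) (hw : ContDiffAt ℝ n w u) :
    ContDiffAt ℝ n (fun u => mink (v u) (w u)) u :=
  (contDiffAt_const (c := minkCLM).clm_apply hv).clm_apply hw

theorem VanishesToOrder.mink_left {m : ℕ} (hv : ContDiffAt ℝ m v u) (hw : ContDiffAt ℝ m w u)
    (hvv : VanishesToOrder m v u) : VanishesToOrder m (fun u => mink (v u) (w u)) u :=
  bilinear_left minkCLM hv hw hvv

theorem mink_deriv_eq_neg_of_eventually_const {c : ℝ} (hv : DifferentiableAt ℝ v u)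
    (hw : DifferentiableAt ℝ w u) (hc : ∀ᶠ t in 𝓝 u, mink (v t) (w t) = c) :
    mink (deriv v u) (w u) = -mink (v u) (deriv w u) := by
  have h_deriv := (hasDerivAt_mink hv.hasDerivAt hw.hasDerivAt).unique
    ((hasDerivAt_const u c).congr_of_eventuallyEq hc)
  linear_combination h_deriv

theorem eq_of_mink_lightlike_basis {e L N : R3} (hee : mink e e = 1) (heL : mink e L = 0)
    (heN : mink e N = 0) (hLL : mink L L = 0) (hNN : mink N N = 0) (hLN : mink L N = 1)
    (x : R3) : x = mink x e • e + mink x N • L + mink x L • N := by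
  have hLe : mink L e = 0 := mink_comm e L ▸ heL
  have hNe : mink N e = 0 := mink_comm e N ▸ heN
  have hNL : mink N L = 1 := mink_comm L N ▸ hLN
  have coordinates (a b c : ℝ) : mink (a • e + b • L + c • N) e = a ∧
      mink (a • e + b • L + c • N) N = b ∧ mink (a • e + b • L + c • N) L = c := by
    simp [mink_add_left, mink_smul_left, *]
  have independent : LinearIndependent ℝ ![e, L, N] := by
    refine Fintype.linearIndependent_iff.2 fun a ha => ?_
    have ha_zero : a 0 • e + a 1 • L + a 2 • N = 0 := by
      simpa [Fin.sum_univ_three] using ha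
    have := coordinates (a 0) (a 1) (a 2)
    simpa [ha_zero, mink_zero_left, Fin.forall_fin_succ, eq_comm] using this
  have hx : x ∈ Submodule.span ℝ (Set.range ![e, L, N]) := by
    rw [independent.span_eq_top_of_card_eq_finrank (by simp)]
    exact Submodule.mem_top
  obtain ⟨a, rfl⟩ := (Submodule.mem_span_range_iff_exists_fun ℝ).1 hx
  obtain ⟨he, hN, hL⟩ := coordinates (a 0) (a 1) (a 2)
  simp [Fin.sum_univ_three, he, hN, hL]

end Mink

/-- The vertex `γ u + L u / α_L u` of the lightcone attached to the parameter `u`; the points `x_L`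
and `x_N` are its values at `0` for the frames `(L, N)` and `(N, L)`. -/
def lightconeVertex (γ L : ℝ → R3) (u : ℝ) : R3 :=
  γ u + (alphaL γ L u)⁻¹ • L u

/-- The displacement `c u - c t` of the vertex `c = lightconeVertex γ L` from its position at `t`,
as a function of `u`. -/
def vertexDisplacement (γ L : ℝ → R3) (t u : ℝ) : R3 :=
  lightconeVertex γ L u - lightconeVertex γ L t

theorem vertexDisplacement_self (γ L : ℝ → R3) (t : ℝ) : vertexDisplacement γ L t t = 0 :=
  sub_self _

/-- The Lorentzian distance-squared function `g` of the curve `γ` from the point `p`; its zeros are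
the parameters at which `γ` meets the lightcone with vertex `p`. -/
def minkDistSq (γ : ℝ → R3) (p : R3) (u : ℝ) : ℝ :=
  mink (γ u - p) (γ u - p)

namespace LightlikeFrame

variable {s : Set ℝ} {γ L N : ℝ → R3} {t u : ℝ} {m n : ℕ}

theorem swap (h : LightlikeFrame s γ L N) : LightlikeFrame s γ N L where
  smooth_gamma := h.smooth_gamma
  smooth_L := h.smooth_N
  smooth_N := h.smooth_L
  unit_speed := h.unit_speed
  eL := h.eN
  eN := h.eL
  LL := h.NN
  NN := h.LL
  LN u hu := mink_comm (L u) (N u) ▸ h.LN u hu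

section Smoothness

variable (h : LightlikeFrame s γ L N) (hs : IsOpen s) (hu : u ∈ s)
include h hs hu

theorem contDiffAt_gamma : ContDiffAt ℝ n γ u :=
  contDiffAt_infty.1 (h.smooth_gamma.contDiffAt (hs.mem_nhds hu)) n

theorem contDiffAt_left : ContDiffAt ℝ n L u :=
  contDiffAt_infty.1 (h.smooth_L.contDiffAt (hs.mem_nhds hu)) n

theorem contDiffAt_right : ContDiffAt ℝ n N u :=
  h.swap.contDiffAt_left hs hu

theorem contDiffAt_tangent : ContDiffAt ℝ n (deriv γ) u :=
  (h.contDiffAt_gamma hs hu (n := n + 1)).derivWithin le_rfl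

theorem contDiffAt_deriv_tangent : ContDiffAt ℝ n (deriv (deriv γ)) u :=
  (h.contDiffAt_tangent hs hu (n := n + 1)).derivWithin le_rfl

theorem contDiffAt_alphaL : ContDiffAt ℝ n (alphaL γ L) u :=
  contDiffAt_mink (h.contDiffAt_deriv_tangent hs hu) (h.contDiffAt_left hs hu)

theorem contDiffAt_alphaN : ContDiffAt ℝ n (alphaN γ N) u :=
  h.swap.contDiffAt_alphaL hs hu

theorem contDiffAt_alphaG : ContDiffAt ℝ n (alphaG L N) u :=
  contDiffAt_mink (h.contDiffAt_left hs hu)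
    ((h.contDiffAt_right hs hu (n := n + 1)).derivWithin le_rfl)

theorem contDiffAt_sigmaL : ContDiffAt ℝ n (sigmaL γ L N) u :=
  ((h.contDiffAt_alphaL hs hu (n := n + 1)).derivWithin le_rfl).add
    ((h.contDiffAt_alphaL hs hu).mul (h.contDiffAt_alphaG hs hu))

theorem contDiffAt_lightconeVertex (hα : alphaL γ L u ≠ 0) :
    ContDiffAt ℝ n (lightconeVertex γ L) u :=
  (h.contDiffAt_gamma hs hu).add
    (((h.contDiffAt_alphaL hs hu).inv hα).smul (h.contDiffAt_left hs hu))

theorem contDiffAt_vertexDisplacement (hα : alphaL γ L u ≠ 0) (t : ℝ) :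
    ContDiffAt ℝ n (vertexDisplacement γ L t) u :=
  (h.contDiffAt_lightconeVertex hs hu hα).sub contDiffAt_const

theorem hasDerivAt_gamma : HasDerivAt γ (deriv γ u) u :=
  ((h.contDiffAt_gamma hs hu (n := 1)).differentiableAt (by simp)).hasDerivAt

theorem hasDerivAt_tangent : HasDerivAt (deriv γ) (deriv (deriv γ) u) u :=
  ((h.contDiffAt_tangent hs hu (n := 1)).differentiableAt (by simp)).hasDerivAt

theorem hasDerivAt_left : HasDerivAt L (deriv L u) u :=
  ((h.contDiffAt_left hs hu (n := 1)).differentiableAt (by simp)).hasDerivAt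

theorem hasDerivAt_alphaL : HasDerivAt (alphaL γ L) (deriv (alphaL γ L) u) u :=
  ((h.contDiffAt_alphaL hs hu (n := 1)).differentiableAt (by simp)).hasDerivAt

end Smoothness

section FrameEquations

variable (h : LightlikeFrame s γ L N) (hu : u ∈ s)
include h hu

theorem eq_sum (x : R3) : x = mink x (deriv γ u) • deriv γ u + mink x (N u) • L u +
    mink x (L u) • N u :=
  eq_of_mink_lightlike_basis (h.unit_speed u hu) (h.eL u hu) (h.eN u hu) (h.LL u hu)
    (h.NN u hu) (h.LN u hu) x

theorem deriv_tangent_eq (hs : IsOpen s) :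
    deriv (deriv γ) u = alphaN γ N u • L u + alphaL γ L u • N u := by
  have e_diff := (h.hasDerivAt_tangent hs hu).differentiableAt
  have h_ee := mink_deriv_eq_neg_of_eventually_const e_diff e_diff
    (Filter.eventually_of_mem (hs.mem_nhds hu) h.unit_speed)
  have h_zero : mink (deriv (deriv γ) u) (deriv γ u) = 0 := by
    rw [mink_comm (deriv γ u)] at h_ee; linarith
  simpa [h_zero] using! h.eq_sum hu (deriv (deriv γ) u)

theorem deriv_left_eq (hs : IsOpen s) :
    deriv L u = -alphaL γ L u • deriv γ u + -alphaG L N u • L u := by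
  have hsu := hs.mem_nhds hu
  have L_diff := (h.hasDerivAt_left hs hu).differentiableAt
  have h_Le : mink (deriv L u) (deriv γ u) = -alphaL γ L u := by
    rw [mink_deriv_eq_neg_of_eventually_const L_diff (h.hasDerivAt_tangent hs hu).differentiableAt
      (Filter.eventually_of_mem hsu fun t ht => mink_comm (L t) _ ▸ h.eL t ht), mink_comm, alphaL]
  have h_LN : mink (deriv L u) (N u) = -alphaG L N u :=
    mink_deriv_eq_neg_of_eventually_const L_diff (h.swap.hasDerivAt_left hs hu).differentiableAt
      (Filter.eventually_of_mem hsu h.LN)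
  have h_LL : mink (deriv L u) (L u) = 0 := by
    have := mink_deriv_eq_neg_of_eventually_const L_diff L_diff
      (Filter.eventually_of_mem hsu h.LL)
    rw [mink_comm (L u)] at this; linarith
  simpa [h_Le, h_LN, h_LL] using h.eq_sum hu (deriv L u)

theorem sigmaL_swap (hs : IsOpen s) : sigmaL γ N L u = sigmaN γ L N u := by
  have h_alphaG : alphaG N L u = -alphaG L N u := by
    rw [alphaG, mink_comm, alphaG]
    exact mink_deriv_eq_neg_of_eventually_const (h.hasDerivAt_left hs hu).differentiableAt
      (h.swap.hasDerivAt_left hs hu).differentiableAt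
      (Filter.eventually_of_mem (hs.mem_nhds hu) h.LN)
  rw [sigmaL, h_alphaG, mul_neg, ← sub_eq_add_neg]
  rfl

end FrameEquations

section Vertex

variable (h : LightlikeFrame s γ L N) (hs : IsOpen s) (hu : u ∈ s)
include h hs hu

theorem hasDerivAt_lightconeVertex (hα : alphaL γ L u ≠ 0) :
    HasDerivAt (lightconeVertex γ L) ((-(alphaL γ L u ^ 2)⁻¹ * sigmaL γ L N u) • L u) u := by
  refine ((h.hasDerivAt_gamma hs hu).add
    (((h.hasDerivAt_alphaL hs hu).inv hα).smul (h.hasDerivAt_left hs hu))).congr_deriv ?_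
  rw [h.deriv_left_eq hu hs, sigmaL, Pi.inv_apply]
  match_scalars <;> field_simp <;> ring

theorem hasDerivAt_vertexDisplacement (hα : alphaL γ L u ≠ 0) (t : ℝ) :
    HasDerivAt (vertexDisplacement γ L t) ((-(alphaL γ L u ^ 2)⁻¹ * sigmaL γ L N u) • L u) u :=
  (h.hasDerivAt_lightconeVertex hs hu hα).sub_const _

theorem hasDerivAt_mink_vertexDisplacement {w : ℝ → R3} {w' : R3} (hα : alphaL γ L u ≠ 0)
    (t : ℝ) (hw : HasDerivAt w w' u) (hLw : mink (L u) (w u) = 0) :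
    HasDerivAt (fun u => mink (vertexDisplacement γ L t u) (w u))
      (mink (vertexDisplacement γ L t u) w') u := by
  refine (hasDerivAt_mink (h.hasDerivAt_vertexDisplacement hs hu hα t) hw).congr_deriv ?_
  rw [mink_smul_left, hLw, mul_zero, add_zero]

theorem hasDerivAt_minkDistSq_lightconeVertex (t : ℝ) :
    HasDerivAt (minkDistSq γ (lightconeVertex γ L t))
      (2 * mink (vertexDisplacement γ L t u) (deriv γ u)) u := by
  have hγ := (h.hasDerivAt_gamma hs hu).sub_const (lightconeVertex γ L t)
  refine (hasDerivAt_mink hγ hγ).congr_deriv ?_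
  have h_sub : vertexDisplacement γ L t u =
      (γ u - lightconeVertex γ L t) + (alphaL γ L u)⁻¹ • L u := by
    simp only [vertexDisplacement, lightconeVertex]; abel
  rw [h_sub, mink_add_left, mink_smul_left, mink_comm (L u), h.eL u hu, mink_comm (deriv γ u)]
  ring

theorem eventually_mem_and_alphaL_ne_zero (hα : alphaL γ L u ≠ 0) :
    ∀ᶠ t in 𝓝 u, t ∈ s ∧ alphaL γ L t ≠ 0 :=
  (hs.eventually_mem hu).and
    ((h.contDiffAt_alphaL hs hu (n := 0)).continuousAt.eventually_ne hα)

end Vertex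

section Contact

variable (h : LightlikeFrame s γ L N) (hs : IsOpen s) (ht : t ∈ s) (hα : alphaL γ L t ≠ 0)
include h hs ht hα

theorem vanishesToOrder_vertexDisplacement_iff :
    VanishesToOrder (m + 1) (vertexDisplacement γ L t) t ↔
      VanishesToOrder m (sigmaL γ L N) t := by
  let speed : ℝ → ℝ := fun u => -(alphaL γ L u ^ 2)⁻¹ * sigmaL γ L N u
  have scale_smooth : ContDiffAt ℝ m (fun u => -(alphaL γ L u ^ 2)⁻¹) t :=
    (((h.contDiffAt_alphaL hs ht).pow 2).inv (pow_ne_zero 2 hα)).neg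
  have hσ := h.contDiffAt_sigmaL hs ht (n := m)
  have speed_iff : VanishesToOrder m speed t ↔ VanishesToOrder m (sigmaL γ L N) t :=
    VanishesToOrder.smul_iff scale_smooth hσ (by simpa using hα)
  have speed_smooth : ContDiffAt ℝ m speed t := scale_smooth.mul hσ
  have hL := h.contDiffAt_left hs ht (n := m)
  have velocity : deriv (vertexDisplacement γ L t) =ᶠ[𝓝 t] fun u => speed u • L u := by
    filter_upwards [h.eventually_mem_and_alphaL_ne_zero hs ht hα] with u ⟨hu, hαu⟩
    exact (h.hasDerivAt_vertexDisplacement hs hu hαu t).deriv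
  have speed_eq : (fun u => mink (speed u • L u) (N u)) =ᶠ[𝓝 t] speed := by
    filter_upwards [hs.mem_nhds ht] with u hu
    rw [mink_smul_left, h.LN u hu, mul_one]
  rw [← speed_iff, VanishesToOrder.succ_iff, VanishesToOrder.congr_iff velocity]
  refine ⟨fun ⟨_, hv⟩ => (VanishesToOrder.congr_iff speed_eq).1 ?_,
    fun hv => ⟨vertexDisplacement_self γ L t, .smul_left speed_smooth hL hv⟩⟩
  exact .mink_left (speed_smooth.smul hL) (h.contDiffAt_right hs ht) hv

theorem deriv_mink_vertexDisplacement_tangent :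
    deriv (fun u => mink (vertexDisplacement γ L t u) (deriv γ u)) =ᶠ[𝓝 t]
      fun u => mink (vertexDisplacement γ L t u) (deriv (deriv γ) u) := by
  filter_upwards [h.eventually_mem_and_alphaL_ne_zero hs ht hα] with u ⟨hu, hαu⟩
  exact (h.hasDerivAt_mink_vertexDisplacement hs hu hαu t (h.hasDerivAt_tangent hs hu)
    (mink_comm (L u) _ ▸ h.eL u hu)).deriv

theorem deriv_mink_vertexDisplacement_left :
    deriv (fun u => mink (vertexDisplacement γ L t u) (L u)) =ᶠ[𝓝 t]
      fun u => mink (vertexDisplacement γ L t u) (deriv L u) := by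
  filter_upwards [h.eventually_mem_and_alphaL_ne_zero hs ht hα] with u ⟨hu, hαu⟩
  exact (h.hasDerivAt_mink_vertexDisplacement hs hu hαu t (h.hasDerivAt_left hs hu)
    (h.LL u hu)).deriv

theorem vanishesToOrder_mink_left_of_tangent
    (hv : VanishesToOrder m (fun u => mink (vertexDisplacement γ L t u) (deriv γ u)) t) :
    VanishesToOrder (m + 1) (fun u => mink (vertexDisplacement γ L t u) (L u)) t := by
  have hD := h.contDiffAt_vertexDisplacement hs ht hα t (n := m)
  have he_smooth := contDiffAt_mink hD (h.contDiffAt_tangent hs ht)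
  have hαL := (h.contDiffAt_alphaL hs ht (n := m)).neg
  refine .of_deriv_eq_smul_add (h.contDiffAt_alphaG hs ht).neg
    (contDiffAt_mink hD (h.contDiffAt_left hs ht)) (hαL.fun_smul he_smooth)
    (by simp [vertexDisplacement_self, mink_zero_left]) ?_ (.smul_right hαL he_smooth hv)
  filter_upwards [h.deriv_mink_vertexDisplacement_left hs ht hα,
    hs.mem_nhds ht] with u h_deriv hu
  rw [h_deriv, h.deriv_left_eq hu hs, mink_add_right, mink_smul_right,
    mink_smul_right, add_comm, smul_eq_mul, smul_eq_mul]

theorem vanishesToOrder_mink_right_of_tangent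
    (hv : VanishesToOrder (m + 1) (fun u => mink (vertexDisplacement γ L t u) (deriv γ u)) t) :
    VanishesToOrder m (fun u => mink (vertexDisplacement γ L t u) (N u)) t := by
  have hD := h.contDiffAt_vertexDisplacement hs ht hα t (n := m)
  have hL_smooth := contDiffAt_mink hD (h.contDiffAt_left hs ht)
  have hαN := (h.contDiffAt_alphaN hs ht (n := m)).neg
  have hLv : VanishesToOrder m (fun u => mink (vertexDisplacement γ L t u) (L u)) t :=
    (h.vanishesToOrder_mink_left_of_tangent hs ht hα hv).mono (by lia)
  have hev : VanishesToOrder m (fun u => mink (vertexDisplacement γ L t u) (deriv (deriv γ) u)) t :=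
    (VanishesToOrder.congr_iff (h.deriv_mink_vertexDisplacement_tangent hs ht hα)).1
      (VanishesToOrder.succ_iff.1 hv).2
  refine (VanishesToOrder.smul_iff (h.contDiffAt_alphaL hs ht)
    (contDiffAt_mink hD (h.contDiffAt_right hs ht)) hα).1 ?_
  refine (VanishesToOrder.congr_iff ?_).1 (VanishesToOrder.add
    (contDiffAt_mink hD (h.contDiffAt_deriv_tangent hs ht)) (hαN.fun_smul hL_smooth) hev
    (.smul_right hαN hL_smooth hLv))
  filter_upwards [hs.mem_nhds ht] with u hu
  rw [h.deriv_tangent_eq hu hs, mink_add_right, mink_smul_right, mink_smul_right]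
  simp only [smul_eq_mul]
  ring

theorem vanishesToOrder_mink_tangent_iff :
    VanishesToOrder (m + 1) (fun u => mink (vertexDisplacement γ L t u) (deriv γ u)) t ↔
      VanishesToOrder m (vertexDisplacement γ L t) t := by
  have hD := h.contDiffAt_vertexDisplacement hs ht hα t (n := m)
  have he := h.contDiffAt_tangent hs ht (n := m)
  have hL := h.contDiffAt_left hs ht (n := m)
  have hN := h.contDiffAt_right hs ht (n := m)
  have hDe := contDiffAt_mink hD he
  have hDL := contDiffAt_mink hD hL
  have hDN := contDiffAt_mink hD hN
  constructor
  · intro hv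
    have expansion : vertexDisplacement γ L t =ᶠ[𝓝 t] fun u =>
        mink (vertexDisplacement γ L t u) (deriv γ u) • deriv γ u +
          mink (vertexDisplacement γ L t u) (N u) • L u +
          mink (vertexDisplacement γ L t u) (L u) • N u :=
      (hs.eventually_mem ht).mono fun u hu => h.eq_sum hu (vertexDisplacement γ L t u)
    refine (VanishesToOrder.congr_iff expansion).2 ?_
    refine .add ((hDe.fun_smul he).add (hDN.fun_smul hL)) (hDL.smul hN)
      (.add (hDe.fun_smul he) (hDN.fun_smul hL) (.smul_left hDe he (hv.mono m.le_succ))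
        (.smul_left hDN hL (h.vanishesToOrder_mink_right_of_tangent hs ht hα hv)))
      (.smul_left hDL hN ?_)
    exact (h.vanishesToOrder_mink_left_of_tangent hs ht hα hv).mono (by lia)
  · intro hv
    refine VanishesToOrder.succ_iff.2 ⟨by simp [vertexDisplacement_self, mink_zero_left], ?_⟩
    exact (VanishesToOrder.congr_iff (h.deriv_mink_vertexDisplacement_tangent hs ht hα)).2
      (.mink_left hD (h.contDiffAt_deriv_tangent hs ht) hv)

theorem vanishesToOrder_minkDistSq_succ_iff :
    VanishesToOrder (m + 1) (minkDistSq γ (lightconeVertex γ L t)) t ↔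
      VanishesToOrder m (fun u => mink (vertexDisplacement γ L t u) (deriv γ u)) t := by
  have on_lightcone : minkDistSq γ (lightconeVertex γ L t) t = 0 := by
    have h_sub : γ t - lightconeVertex γ L t = -(alphaL γ L t)⁻¹ • L t := by
      rw [lightconeVertex, neg_smul]; abel
    rw [minkDistSq, h_sub, mink_smul_left, mink_smul_right, h.LL t ht, mul_zero, mul_zero]
  have h_deriv : deriv (minkDistSq γ (lightconeVertex γ L t)) =ᶠ[𝓝 t] fun u =>
      (2 : ℝ) • mink (vertexDisplacement γ L t u) (deriv γ u) :=
    (hs.eventually_mem ht).mono fun u hu =>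
      (h.hasDerivAt_minkDistSq_lightconeVertex hs hu t).deriv
  rw [VanishesToOrder.succ_iff, VanishesToOrder.congr_iff h_deriv]
  simp only [on_lightcone, true_and]
  exact VanishesToOrder.smul_iff contDiffAt_const
    (contDiffAt_mink (h.contDiffAt_vertexDisplacement hs ht hα t) (h.contDiffAt_tangent hs ht))
    two_ne_zero

theorem vanishesToOrder_minkDistSq_iff :
    VanishesToOrder (m + 3) (minkDistSq γ (lightconeVertex γ L t)) t ↔
      VanishesToOrder m (sigmaL γ L N) t :=
  (h.vanishesToOrder_minkDistSq_succ_iff hs ht hα).trans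
    ((h.vanishesToOrder_mink_tangent_iff hs ht hα).trans
      (h.vanishesToOrder_vertexDisplacement_iff hs ht hα))

end Contact

end LightlikeFrame

/-- With `x_L = γ̂(0) + L(0)/α_L(0)` and
`g_L(u) = ⟨γ̂(u) - x_L, γ̂(u) - x_L⟩`, for every `k ≥ 3`:
`g_L(0) = g_L'(0) = ⋯ = g_L⁽ᵏ⁾(0) = 0` iff `σ_L(0) = ⋯ = σ_L⁽ᵏ⁻³⁾(0) = 0`;
similarly for `g_N` and `σ_N`. -/
theorem contact_with_lightcone (a b : ℝ) (γ L N : ℝ → R3)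
    (hframe : LightlikeFrame (Set.Ioo a b) γ L N)
    (h0 : (0 : ℝ) ∈ Set.Ioo a b) :
    (alphaL γ L 0 ≠ 0 → ∀ k : ℕ, 3 ≤ k →
      ((∀ l ≤ k, deriv^[l]
          (fun u => mink (γ u - (γ 0 + (alphaL γ L 0)⁻¹ • L 0))
                         (γ u - (γ 0 + (alphaL γ L 0)⁻¹ • L 0))) 0 = 0) ↔
       (∀ l ≤ k - 3, deriv^[l] (sigmaL γ L N) 0 = 0))) ∧
    (alphaN γ N 0 ≠ 0 → ∀ k : ℕ, 3 ≤ k →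
      ((∀ l ≤ k, deriv^[l]
          (fun u => mink (γ u - (γ 0 + (alphaN γ N 0)⁻¹ • N 0))
                         (γ u - (γ 0 + (alphaN γ N 0)⁻¹ • N 0))) 0 = 0) ↔
       (∀ l ≤ k - 3, deriv^[l] (sigmaN γ L N) 0 = 0))) := by
  have hs : IsOpen (Set.Ioo a b) := isOpen_Ioo
  have h_sigma : sigmaL γ N L =ᶠ[𝓝 0] sigmaN γ L N :=
    (hs.eventually_mem h0).mono fun u hu => hframe.sigmaL_swap hu hs
  refine ⟨fun hα k hk => ?_, fun hα k hk => ?_⟩ <;>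
    obtain ⟨m, rfl⟩ := Nat.exists_eq_add_of_le' hk <;>
    rw [Nat.add_sub_cancel, ← VanishesToOrder.succ_iff_forall_le,
      ← VanishesToOrder.succ_iff_forall_le]
  · exact hframe.vanishesToOrder_minkDistSq_iff hs h0 hα
  · exact (hframe.swap.vanishesToOrder_minkDistSq_iff hs h0 hα).trans
      (VanishesToOrder.congr_iff h_sigma)
end
end
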